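/- Let Ω₀ ∈ ℝ^d be resonant with resonance module Γ = Γ_{Ω₀}(ℤ), and suppose there exist ν, τ > 0 such that dist(k·Ω₀, ℤ) ≥ ν|k|^{−τ} for every k ∈ ℤ^d ∖ Γ. Let n, s be natural numbers with s > τ + d and n ≥ s, let M ≥ 0, and let f: ℝ^d → ℝ be a continuous ℤ^d-periodic function whose Fourier coefficients satisfy |f̂(k)|·|k|^n ≤ M for all k ∈ ℤ^d ∖ {0} and f̂ is bounded. Define h by the Fourier coefficients ĥ(k) = f̂(k)/(e^{2πi k·Ω₀} − 1) for k ∉ Γ and ĥ(k) = 0 for k ∈ Γ, and P by P̂(k) = f̂(k) for k ∈ Γ and P̂(k) = 0 otherwise. Then Σ_{k∈ℤ^d} |k|^{n−s}·|ĥ(k)| ≤ C·ν^{−1}·M for a constant C depending only on d, τ, s; the Fourier series of h and P converge to continuous ℤ^d-periodic functions of class C^{n−s}; and h(θ+Ω₀) − h(θ) = f(θ) − P(θ) for all θ ∈ ℝ^d. -/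

import Mathlib

/-!
Since `|e^{2πix} − 1| ≥ 4 dist(x, ℤ)`, the Diophantine condition bounds each small divisor from below
by `ν|k|^{-τ}`, so `|k|^{n-s}|ĥ(k)| ≤ ν⁻¹ M |k|^{τ-s}` (`smallDivisor_bound`). The right side is
summable over `ℤ^d` because `s - τ > d` (`summable_l1_rpow`), which gives the weighted estimate with
`C = 1 + ∑ |k|^{τ-s}`. Likewise `|k|^{n-s}|f̂(k)| ≤ M|k|^{-s}` off `k = 0`, hence the same summability
for `P̂`.

A Fourier series with `∑ |k|^N |c k| < ∞` may be differentiated `N` times term by term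
(`contDiff_series`), and `ĥ`, `P̂` are Hermitian-symmetric because `f` is real, so their series define
real functions `h`, `P` of class `C^{n-s}` (`ofReal_re_series`). Finally `f` equals its own absolutely
convergent Fourier series (`hasSum_fourierCoef`), and the cohomological equation reduces to the
identity `ĥ(k)(e^{2πi k·Ω₀} − 1) = f̂(k) − P̂(k)` for each `k`.
-/

open scoped BigOperators
open MeasureTheory

/-- Fourier coefficient `Q̂(k) = ∫_{[0,1]^d} Q(θ) e^{−2πi k·θ} dθ` of a
`ℤ^d`-periodic function `Q : ℝ^d → ℝ`. -/
noncomputable def fourierCoef {d : ℕ} (Q : (Fin d → ℝ) → ℝ) (k : Fin d → ℤ) : ℂ :=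
  ∫ θ in Set.Icc (0 : Fin d → ℝ) 1,
    (Q θ : ℂ) * Complex.exp (-(2 * (Real.pi : ℂ) * Complex.I) * ∑ i, (k i : ℂ) * (θ i : ℂ))

/-! ### Lattice sums -/

lemma l1_nonneg {d : ℕ} (k : Fin d → ℤ) : 0 ≤ ∑ i, |(k i : ℝ)| :=
  Finset.sum_nonneg fun _ _ => abs_nonneg _

lemma one_le_l1 {d : ℕ} {k : Fin d → ℤ} (hk : k ≠ 0) : 1 ≤ ∑ i, |(k i : ℝ)| := by
  obtain ⟨i, hi⟩ := Function.ne_iff.mp hk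
  calc (1 : ℝ) ≤ |(k i : ℝ)| := by exact_mod_cast Int.one_le_abs hi
    _ ≤ _ := Finset.single_le_sum (f := fun i => |(k i : ℝ)|) (fun _ _ => abs_nonneg _)
      (Finset.mem_univ i)

/-- The lattice sum `∑ |k|^r` over `ℤ^d` converges for `r < -d`. The term `k = 0` is the junk value
`0 ^ r = 0`. -/
lemma summable_l1_rpow (d : ℕ) {r : ℝ} (hr : r < -d) :
    Summable fun k : Fin d → ℤ => (∑ i, |(k i : ℝ)|) ^ r := by
  have hd : (0 : ℝ) ≤ d := Nat.cast_nonneg d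
  let L : Submodule ℤ (Fin d → ℝ) := Submodule.span ℤ (Set.range (Pi.basisFun ℝ (Fin d)))
  have hrank : Module.finrank ℤ L = d := by
    rw [ZLattice.rank ℝ L]; simp
  have hL : Summable fun z : L => ‖z‖ ^ r := ZLattice.summable_norm_rpow L r (by rwa [hrank])
  have hmem : ∀ k : Fin d → ℤ, (fun i => (k i : ℝ)) ∈ L := by
    intro k
    rw [show (fun i => (k i : ℝ)) = ∑ i, k i • Pi.basisFun ℝ (Fin d) i by
      ext j; simp [Finset.sum_apply, Pi.single_apply]]
    exact Submodule.sum_mem _ fun i _ => Submodule.smul_mem _ _ (Submodule.subset_span ⟨i, rfl⟩)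
  have hinj : Function.Injective fun k : Fin d → ℤ => (⟨_, hmem k⟩ : L) := by
    intro k l hkl
    ext i
    simpa using congrFun (congrArg Subtype.val hkl) i
  refine (hL.comp_injective hinj).of_nonneg_of_le
    (fun k => Real.rpow_nonneg (l1_nonneg k) _) fun k => ?_
  rcases eq_or_ne k 0 with rfl | hk
  · have : r ≠ 0 := by linarith
    simpa [Real.zero_rpow this] using Real.rpow_nonneg (norm_nonneg _) _
  · refine Real.rpow_le_rpow_of_nonpos ?_ ?_ (by linarith)
    · rw [norm_pos_iff]
      intro h0
      exact hk (hinj (h0.trans (Subtype.ext (by ext; simp))))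
    · change ‖fun i => (k i : ℝ)‖ ≤ _
      rw [pi_norm_le_iff_of_nonneg (l1_nonneg k)]
      intro i
      exact Finset.single_le_sum (f := fun i => |(k i : ℝ)|) (fun _ _ => abs_nonneg _)
        (Finset.mem_univ i)

/-! ### Small divisors -/

/-- Small-divisor bound `|e^{2πix} − 1| = 2|sin πx| ≥ 4 dist(x, ℤ)`. -/
lemma four_mul_le_norm_exp_sub_one {x δ : ℝ} (h : ∀ m : ℤ, δ ≤ |x - m|) :
    4 * δ ≤ ‖Complex.exp (2 * (Real.pi : ℂ) * Complex.I * (x : ℝ)) - 1‖ := by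
  set y : ℝ := x - round x with hy
  have hexp : Complex.exp (2 * (Real.pi : ℂ) * Complex.I * (x : ℝ)) =
      Complex.exp (Complex.I * ((2 * Real.pi * y : ℝ) : ℂ)) := by
    rw [← Complex.exp_periodic.sub_int_mul_eq (round x)]
    congr 1
    rw [hy]; push_cast; ring
  rw [hexp, Complex.norm_exp_I_mul_ofReal_sub_one]
  have hy2 : |y| ≤ 1 / 2 := abs_sub_round x
  have hpi := Real.pi_pos
  have := Real.mul_abs_le_abs_sin (x := Real.pi * y) (by
    rw [abs_mul, abs_of_pos hpi]; nlinarith)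
  rw [abs_mul, abs_of_pos hpi] at this
  rw [show 2 * Real.pi * y / 2 = Real.pi * y by ring, norm_mul, Real.norm_eq_abs, Real.norm_eq_abs,
    abs_of_pos (by norm_num : (0:ℝ) < 2)]
  have h2 : 2 / Real.pi * (Real.pi * |y|) = 2 * |y| := by field_simp
  have := h (round x)
  linarith

/-! ### Characters of the torus and their derivatives -/

/-- The character `θ ↦ e^{2πi k·θ}` of `ℝ^d`. -/
noncomputable def torusChar {d : ℕ} (k : Fin d → ℤ) (θ : Fin d → ℝ) : ℂ :=
  Complex.exp (2 * (Real.pi : ℂ) * Complex.I * ∑ i, (k i : ℂ) * (θ i : ℂ))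

lemma torusChar_add {d : ℕ} (k : Fin d → ℤ) (θ η : Fin d → ℝ) :
    torusChar k (θ + η) = torusChar k θ * torusChar k η := by
  simp only [torusChar, ← Complex.exp_add, ← mul_add, ← Finset.sum_add_distrib, Pi.add_apply,
    Complex.ofReal_add]

lemma torusChar_int {d : ℕ} (k l : Fin d → ℤ) : torusChar k (fun i => (l i : ℝ)) = 1 := by
  rw [torusChar, Complex.exp_eq_one_iff]
  exact ⟨∑ i, k i * l i, by push_cast; ring⟩

lemma norm_torusChar {d : ℕ} (k : Fin d → ℤ) (θ : Fin d → ℝ) : ‖torusChar k θ‖ = 1 := by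
  have : torusChar k θ =
      Complex.exp (((2 * Real.pi * ∑ i, (k i : ℝ) * θ i : ℝ) : ℂ) * Complex.I) := by
    rw [torusChar]; congr 1; push_cast; ring
  rw [this, Complex.norm_exp_ofReal_mul_I]

lemma torusChar_neg {d : ℕ} (k : Fin d → ℤ) (θ : Fin d → ℝ) :
    torusChar (-k) θ = starRingEnd ℂ (torusChar k θ) := by
  simp [torusChar, ← Complex.exp_conj, Complex.conj_ofNat]

lemma iteratedDeriv_cexp_ofReal (c : ℂ) (m : ℕ) :
    iteratedDeriv m (fun t : ℝ => Complex.exp (c * t)) = fun t : ℝ => c ^ m * Complex.exp (c * t) := by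
  induction m with
  | zero => simp
  | succ m ih =>
    rw [iteratedDeriv_succ, ih]
    ext t
    have h1 : HasDerivAt (fun t : ℝ => c * (t : ℂ)) c t := by
      simpa using (Complex.ofRealCLM.hasDerivAt (x := t)).const_mul c
    rw [(h1.cexp.const_mul (c ^ m)).deriv]
    ring

/-- The linear form `θ ↦ k·θ`. -/
noncomputable def dotCLM {d : ℕ} (k : Fin d → ℤ) : (Fin d → ℝ) →L[ℝ] ℝ :=
  ∑ i, (k i : ℝ) • ContinuousLinearMap.proj i

lemma dotCLM_apply {d : ℕ} (k : Fin d → ℤ) (θ : Fin d → ℝ) :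
    dotCLM k θ = ∑ i, (k i : ℝ) * θ i := by
  simp [dotCLM]

lemma norm_dotCLM_le {d : ℕ} (k : Fin d → ℤ) : ‖dotCLM k‖ ≤ ∑ i, |(k i : ℝ)| := by
  refine ContinuousLinearMap.opNorm_le_bound _ (l1_nonneg k) fun θ => ?_
  rw [dotCLM_apply, Finset.sum_mul]
  refine (norm_sum_le _ _).trans (Finset.sum_le_sum fun i _ => ?_)
  rw [norm_mul, Real.norm_eq_abs]
  gcongr
  exact norm_le_pi_norm θ i

lemma torusChar_eq_comp {d : ℕ} (k : Fin d → ℤ) :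
    torusChar k = (fun t : ℝ => Complex.exp (2 * (Real.pi : ℂ) * Complex.I * t)) ∘ dotCLM k := by
  ext θ
  simp [torusChar, dotCLM_apply]

lemma contDiff_cexp_line (c : ℂ) (N : ℕ) : ContDiff ℝ N fun t : ℝ => Complex.exp (c * t) :=
  (contDiff_const.mul Complex.ofRealCLM.contDiff).cexp

lemma contDiff_torusChar {d : ℕ} (k : Fin d → ℤ) (N : ℕ) : ContDiff ℝ N (torusChar k) := by
  rw [torusChar_eq_comp]
  exact (contDiff_cexp_line _ N).comp (dotCLM k).contDiff

lemma norm_iteratedFDeriv_torusChar_le {d : ℕ} (k : Fin d → ℤ) (m : ℕ) (θ : Fin d → ℝ) :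
    ‖iteratedFDeriv ℝ m (torusChar k) θ‖ ≤ (2 * Real.pi) ^ m * (∑ i, |(k i : ℝ)|) ^ m := by
  rw [torusChar_eq_comp, ContinuousLinearMap.iteratedFDeriv_comp_right (dotCLM k)
    (contDiff_cexp_line _ m) θ le_rfl]
  refine (ContinuousMultilinearMap.norm_compContinuousLinearMap_le _ _).trans ?_
  rw [norm_iteratedFDeriv_eq_norm_iteratedDeriv, iteratedDeriv_cexp_ofReal, norm_mul, norm_pow,
    show Complex.exp (2 * (Real.pi : ℂ) * Complex.I * (dotCLM k θ : ℝ)) = torusChar k θ by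
      rw [torusChar_eq_comp]; rfl, norm_torusChar]
  simp only [Finset.prod_const, Finset.card_univ, Fintype.card_fin, mul_one]
  have : ‖2 * (Real.pi : ℂ) * Complex.I‖ = 2 * Real.pi := by
    simp [abs_of_pos Real.pi_pos]
  rw [this]
  gcongr
  exact norm_dotCLM_le k

/-! ### Absolutely convergent Fourier series -/

/-- The weight `|k|^N` is at least `1` off `k = 0`, so dropping it costs only one term. -/
lemma summable_norm_of_weighted {d N : ℕ} {c : (Fin d → ℤ) → ℂ}
    (hc : Summable fun k => (∑ i, |(k i : ℝ)|) ^ N * ‖c k‖) : Summable fun k => ‖c k‖ := by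
  classical
  refine (hc.add (hasSum_ite_eq (0 : Fin d → ℤ) ‖c 0‖).summable).of_nonneg_of_le
    (fun k => norm_nonneg _) fun k => ?_
  by_cases hk : k = 0
  · subst hk
    simp only [if_true]
    have := mul_nonneg (pow_nonneg (l1_nonneg (0 : Fin d → ℤ)) N) (norm_nonneg (c 0))
    linarith
  · simp only [hk, if_false, add_zero]
    exact le_mul_of_one_le_left (norm_nonneg _) (one_le_pow₀ (one_le_l1 hk))

lemma summable_series {d : ℕ} {c : (Fin d → ℤ) → ℂ} (hc : Summable fun k => ‖c k‖)
    (θ : Fin d → ℝ) : Summable fun k => c k * torusChar k θ := by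
  refine Summable.of_norm ?_
  simpa [norm_torusChar] using hc

/-- A Fourier series with `∑ |k|^N |c k| < ∞` is of class `C^N`: the `m`-th derivative of a character
is at most `(2π|k|)^m`, and `|k|^m ≤ 1 + |k|^N` for `m ≤ N`. -/
lemma contDiff_series {d N : ℕ} {c : (Fin d → ℤ) → ℂ}
    (hc : Summable fun k => (∑ i, |(k i : ℝ)|) ^ N * ‖c k‖) :
    ContDiff ℝ N fun θ => ∑' k, c k * torusChar k θ := by
  have hc0 := summable_norm_of_weighted hc
  refine contDiff_tsum (N := (N : ℕ∞)) (𝕜 := ℝ) (v := fun m k => (2 * Real.pi) ^ m *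
      (‖c k‖ + (∑ i, |(k i : ℝ)|) ^ N * ‖c k‖)) (fun k => ?_) (fun m _ => ?_)
      (fun m k θ hm => ?_)
  · exact contDiff_const.mul (contDiff_torusChar k N)
  · exact (hc0.add hc).mul_left _
  · have hm' : m ≤ N := by exact_mod_cast hm
    have : (fun θ => c k * torusChar k θ) = c k • torusChar k := rfl
    rw [this, iteratedFDeriv_const_smul_apply (contDiff_torusChar k m).contDiffAt, norm_smul]
    refine (mul_le_mul_of_nonneg_left (norm_iteratedFDeriv_torusChar_le k m θ)
      (norm_nonneg _)).trans ?_
    have hpow : (∑ i, |(k i : ℝ)|) ^ m ≤ 1 + (∑ i, |(k i : ℝ)|) ^ N := by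
      have h0 := pow_nonneg (l1_nonneg k) N
      rcases le_total (∑ i, |(k i : ℝ)|) 1 with h | h
      · linarith [pow_le_one₀ (n := m) (l1_nonneg k) h]
      · linarith [pow_le_pow_right₀ h hm']
    calc ‖c k‖ * ((2 * Real.pi) ^ m * (∑ i, |(k i : ℝ)|) ^ m)
        ≤ ‖c k‖ * ((2 * Real.pi) ^ m * (1 + (∑ i, |(k i : ℝ)|) ^ N)) := by gcongr
      _ = _ := by ring

lemma series_periodic {d : ℕ} (c : (Fin d → ℤ) → ℂ) (θ : Fin d → ℝ) (l : Fin d → ℤ) :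
    ∑' k, c k * torusChar k (θ + fun i => (l i : ℝ)) = ∑' k, c k * torusChar k θ := by
  simp only [torusChar_add, torusChar_int, mul_one]

/-- A Fourier series with Hermitian-symmetric coefficients is real valued. -/
lemma ofReal_re_series {d : ℕ} {c : (Fin d → ℤ) → ℂ}
    (hc : ∀ k, c (-k) = starRingEnd ℂ (c k)) (θ : Fin d → ℝ) :
    (((∑' k, c k * torusChar k θ).re : ℝ) : ℂ) = ∑' k, c k * torusChar k θ := by
  rw [← Complex.conj_eq_iff_re, Complex.conj_tsum, ← (Equiv.neg (Fin d → ℤ)).tsum_eq]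
  refine tsum_congr fun k => ?_
  simp [hc, torusChar_neg]

/-! ### Fourier coefficients of a periodic function -/

lemma fourierCoef_neg {d : ℕ} (f : (Fin d → ℝ) → ℝ) (k : Fin d → ℤ) :
    fourierCoef f (-k) = starRingEnd ℂ (fourierCoef f k) := by
  rw [fourierCoef, fourierCoef, ← integral_conj]
  refine integral_congr_ae (Filter.Eventually.of_forall fun θ => ?_)
  simp [← Complex.exp_conj, Complex.conj_ofNat]

lemma mFourier_mk {d : ℕ} (k : Fin d → ℤ) (θ : Fin d → ℝ) :
    UnitAddTorus.mFourier k (fun i => (θ i : UnitAddCircle)) = torusChar k θ := by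
  simp only [UnitAddTorus.mFourier, ContinuousMap.coe_mk, torusChar, fourier_coe_apply,
    ← Complex.exp_sum]
  congr 1
  rw [Finset.mul_sum]
  refine Finset.sum_congr rfl fun i _ => ?_
  push_cast
  ring

/-- A continuous `ℤ^d`-periodic function descends to a continuous function on `(ℝ/ℤ)^d`. -/
lemma exists_torus_lift {d : ℕ} {f : (Fin d → ℝ) → ℝ} (hf : Continuous f)
    (hper : ∀ (θ : Fin d → ℝ) (k : Fin d → ℤ), f (θ + fun i => (k i : ℝ)) = f θ) :
    ∃ F : C(UnitAddTorus (Fin d), ℂ), ∀ θ : Fin d → ℝ,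
      F (fun i => (θ i : UnitAddCircle)) = (f θ : ℂ) := by
  let π : (Fin d → ℝ) → UnitAddTorus (Fin d) := Pi.map fun _ (x : ℝ) => (x : UnitAddCircle)
  have hπ : IsOpenQuotientMap π :=
    IsOpenQuotientMap.piMap fun _ => QuotientAddGroup.isOpenQuotientMap_mk
  let F : UnitAddTorus (Fin d) → ℂ := fun t => f (Function.surjInv hπ.surjective t)
  have hF : ∀ θ, F (π θ) = (f θ : ℂ) := by
    intro θ
    have h := Function.surjInv_eq hπ.surjective (π θ)
    set η := Function.surjInv hπ.surjective (π θ) with hη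
    have : ∀ i, ∃ l : ℤ, θ i + l = η i := by
      intro i
      have hi : ((η i : ℝ) : UnitAddCircle) = (θ i : ℝ) := congrFun h i
      rw [← sub_eq_zero, ← AddCircle.coe_sub, AddCircle.coe_eq_zero_iff] at hi
      obtain ⟨l, hl⟩ := hi
      exact ⟨l, by simp only [zsmul_eq_mul, mul_one] at hl; linarith⟩
    choose l hl using this
    have : η = θ + fun i => (l i : ℝ) := by ext i; simp [hl]
    change (f η : ℂ) = _
    rw [this, hper]
  refine ⟨⟨F, hπ.isQuotientMap.continuous_iff.mpr ?_⟩, hF⟩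
  rw [show F ∘ π = fun θ => (f θ : ℂ) from funext hF]
  exact Complex.continuous_ofReal.comp hf

/-- Fourier inversion for continuous periodic functions with absolutely summable coefficients,
transported from the torus `(ℝ/ℤ)^d`. -/
lemma hasSum_fourierCoef {d : ℕ} {f : (Fin d → ℝ) → ℝ} (hf : Continuous f)
    (hper : ∀ (θ : Fin d → ℝ) (k : Fin d → ℤ), f (θ + fun i => (k i : ℝ)) = f θ)
    (hs : Summable fun k => ‖fourierCoef f k‖) (θ : Fin d → ℝ) :
    HasSum (fun k => fourierCoef f k * torusChar k θ) (f θ : ℂ) := by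
  obtain ⟨F, hF⟩ := exists_torus_lift hf hper
  have hcoef : UnitAddTorus.mFourierCoeff F = fourierCoef f := by
    ext k
    rw [UnitAddTorus.mFourierCoeff_eq_integral _ _ 0, fourierCoef]
    have hset : ({x : Fin d → ℝ | ∀ i, x i ∈ Set.Ioc ((0 : Fin d → ℝ) i) ((0 : Fin d → ℝ) i + 1)})
        =ᵐ[volume] Set.Icc (0 : Fin d → ℝ) 1 := by
      have := Measure.univ_pi_Ioc_ae_eq_Icc (μ := fun _ : Fin d => (volume : Measure ℝ))
        (f := 0) (g := 1)
      rw [← volume_pi] at this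
      have hbox : ({x : Fin d → ℝ | ∀ i,
          x i ∈ Set.Ioc ((0 : Fin d → ℝ) i) ((0 : Fin d → ℝ) i + 1)}) =
          Set.univ.pi fun i => Set.Ioc ((0 : Fin d → ℝ) i) ((1 : Fin d → ℝ) i) := by
        ext x; simp [Set.mem_pi]
      rwa [hbox]
    rw [setIntegral_congr_set hset]
    refine integral_congr_ae (Filter.Eventually.of_forall fun x => ?_)
    simp only [hF, mFourier_mk, torusChar, smul_eq_mul]
    rw [mul_comm]
    congr 2
    simp
  have := UnitAddTorus.hasSum_mFourier_series_apply_of_summable (f := F)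
    (by rw [hcoef]; exact hs.of_norm) (fun i => (θ i : UnitAddCircle))
  simpa only [hcoef, mFourier_mk, hF, smul_eq_mul] using this

/-! ### Coefficient estimates -/

/-- The decay `|f̂(k)| ≤ M|k|^{-n}` makes `|k|^{n-s} f̂(k)` absolutely summable once `s > d`. -/
lemma summable_weighted_fourierCoef {d n s : ℕ} {M : ℝ} (hs : (d : ℝ) < s) (hsn : s ≤ n)
    {c : (Fin d → ℤ) → ℂ}
    (hM : ∀ k : Fin d → ℤ, k ≠ 0 → ‖c k‖ * (∑ i, |(k i : ℝ)|) ^ (n : ℝ) ≤ M) :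
    Summable fun k => (∑ i, |(k i : ℝ)|) ^ (n - s) * ‖c k‖ := by
  classical
  have h1 : Summable fun k : Fin d → ℤ => M * (∑ i, |(k i : ℝ)|) ^ (-(s : ℝ)) :=
    (summable_l1_rpow d (by linarith)).mul_left M
  have h2 := (hasSum_ite_eq (0 : Fin d → ℤ)
    ((∑ i, |((0 : Fin d → ℤ) i : ℝ)|) ^ (n - s) * ‖c 0‖)).summable
  refine (h1.add h2).of_nonneg_of_le
    (fun k => mul_nonneg (pow_nonneg (l1_nonneg k) _) (norm_nonneg _)) fun k => ?_
  by_cases hk : k = 0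
  · subst hk
    have hs0 : -(s : ℝ) ≠ 0 := by
      have : (0 : ℝ) ≤ d := Nat.cast_nonneg d
      linarith
    simp [Real.zero_rpow hs0]
  · have hpos : 0 < ∑ i, |(k i : ℝ)| := one_pos.trans_le (one_le_l1 hk)
    simp only [hk, if_false, add_zero]
    calc (∑ i, |(k i : ℝ)|) ^ (n - s) * ‖c k‖
        = (‖c k‖ * (∑ i, |(k i : ℝ)|) ^ (n : ℝ)) * (∑ i, |(k i : ℝ)|) ^ (-(s : ℝ)) := by
          rw [mul_assoc, ← Real.rpow_add hpos, ← Real.rpow_natCast, Nat.cast_sub hsn, mul_comm]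
          rfl
      _ ≤ _ := mul_le_mul_of_nonneg_right (hM k hk) (Real.rpow_nonneg hpos.le _)

/-- Termwise estimate on the coefficients of `h`: one small divisor costs a factor `|k|^τ / ν`. -/
lemma smallDivisor_bound {A x ν M τ n s : ℝ} (hA : 0 < A) (hν : 0 < ν) {z : ℂ}
    (hM : ‖z‖ * A ^ n ≤ M) (hdio : ∀ m : ℤ, ν * A ^ (-τ) ≤ |x - m|) :
    A ^ (n - s) *
        ‖z / (Complex.exp (2 * (Real.pi : ℂ) * Complex.I * (x : ℝ)) - 1)‖ ≤
      ν⁻¹ * M * A ^ (τ - s) := by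
  have hAτ : 0 < A ^ (-τ) := Real.rpow_pos_of_pos hA _
  have hden := four_mul_le_norm_exp_sub_one hdio
  have hden' : ν * A ^ (-τ) ≤
      ‖Complex.exp (2 * (Real.pi : ℂ) * Complex.I * (x : ℝ)) - 1‖ := by
    nlinarith [mul_pos hν hAτ]
  rw [norm_div]
  calc A ^ (n - s) * (‖z‖ / ‖Complex.exp (2 * (Real.pi : ℂ) * Complex.I * (x : ℝ)) - 1‖)
      ≤ A ^ (n - s) * (‖z‖ / (ν * A ^ (-τ))) := by
        gcongr
    _ = ν⁻¹ * (‖z‖ * A ^ n) * A ^ (τ - s) := by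
        rw [Real.rpow_neg hA.le, Real.rpow_sub hA, Real.rpow_sub hA]
        field_simp
    _ ≤ _ := by gcongr

/-! ### The averaging step -/

/-- finitely differentiable averaging step.  For `Ω₀` resonant with
module `Γ`, Diophantine off `Γ`, and `f` with `|f̂(k)||k|^n ≤ M`, the coefficients
`ĥ(k) = f̂(k)/(e^{2πik·Ω₀}−1)` (for `k ∉ Γ`, zero on `Γ`) and `P̂ = f̂·1_Γ` satisfy
`∑ |k|^{n−s}|ĥ(k)| ≤ C ν⁻¹ M` (`C = C(d,τ,s)`, `s > τ+d`, `n ≥ s`), the corresponding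
Fourier series define `C^{n−s}` periodic functions `h, P`, and
`h(θ+Ω₀) − h(θ) = f(θ) − P(θ)`. -/
theorem averaging_step_finite_differentiability
    (d : ℕ) (τ : ℝ) (s : ℕ) (hτ : 0 < τ) (hs : τ + (d : ℝ) < (s : ℕ)) :
    ∃ C : ℝ, 0 < C ∧
      ∀ (ν M : ℝ) (n : ℕ) (Ω₀ : Fin d → ℝ), 0 < ν → 0 ≤ M → s ≤ n →
      (∃ k : Fin d → ℤ, k ≠ 0 ∧ ∃ m : ℤ, (∑ i, (k i : ℝ) * Ω₀ i) = (m : ℝ)) →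
      (∀ k : Fin d → ℤ, ¬(∃ m : ℤ, (∑ i, (k i : ℝ) * Ω₀ i) = (m : ℝ)) →
        ∀ m : ℤ,
          ν * (∑ i, |(k i : ℝ)|) ^ (-τ) ≤ |(∑ i, (k i : ℝ) * Ω₀ i) - (m : ℝ)|) →
      ∀ f : (Fin d → ℝ) → ℝ, Continuous f →
      (∀ (θ : Fin d → ℝ) (k : Fin d → ℤ), f (θ + fun i => (k i : ℝ)) = f θ) →
      (∃ B : ℝ, ∀ k : Fin d → ℤ, ‖fourierCoef f k‖ ≤ B) →
      (∀ k : Fin d → ℤ, k ≠ 0 →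
        ‖fourierCoef f k‖ * (∑ i, |(k i : ℝ)|) ^ (n : ℝ) ≤ M) →
      ∀ hcoef Pcoef : (Fin d → ℤ) → ℂ,
      (∀ k : Fin d → ℤ, (∃ m : ℤ, (∑ i, (k i : ℝ) * Ω₀ i) = (m : ℝ)) →
        hcoef k = 0 ∧ Pcoef k = fourierCoef f k) →
      (∀ k : Fin d → ℤ, ¬(∃ m : ℤ, (∑ i, (k i : ℝ) * Ω₀ i) = (m : ℝ)) →
        hcoef k = fourierCoef f k /
            (Complex.exp (2 * (Real.pi : ℂ) * Complex.I * (∑ i, (k i : ℝ) * Ω₀ i : ℝ)) - 1) ∧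
          Pcoef k = 0) →
      (Summable (fun k : Fin d → ℤ =>
          (∑ i, |(k i : ℝ)|) ^ ((n : ℝ) - (s : ℝ)) * ‖hcoef k‖) ∧
        (∑' k : Fin d → ℤ, (∑ i, |(k i : ℝ)|) ^ ((n : ℝ) - (s : ℝ)) * ‖hcoef k‖) ≤
          C * ν⁻¹ * M) ∧
      ∃ h P : (Fin d → ℝ) → ℝ,
        ContDiff ℝ (n - s : ℕ) h ∧ ContDiff ℝ (n - s : ℕ) P ∧
        (∀ (θ : Fin d → ℝ) (k : Fin d → ℤ), h (θ + fun i => (k i : ℝ)) = h θ) ∧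
        (∀ (θ : Fin d → ℝ) (k : Fin d → ℤ), P (θ + fun i => (k i : ℝ)) = P θ) ∧
        (∀ θ : Fin d → ℝ, (h θ : ℂ) = ∑' k : Fin d → ℤ,
          hcoef k * Complex.exp (2 * (Real.pi : ℂ) * Complex.I * ∑ i, (k i : ℂ) * (θ i : ℂ))) ∧
        (∀ θ : Fin d → ℝ, (P θ : ℂ) = ∑' k : Fin d → ℤ,
          Pcoef k * Complex.exp (2 * (Real.pi : ℂ) * Complex.I * ∑ i, (k i : ℂ) * (θ i : ℂ))) ∧
        (∀ θ, h (θ + Ω₀) - h θ = f θ - P θ) := by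
  have hd0 : (0 : ℝ) ≤ d := Nat.cast_nonneg d
  have hS := summable_l1_rpow d (r := τ - s) (by linarith)
  have hS0 : 0 ≤ ∑' k : Fin d → ℤ, (∑ i, |(k i : ℝ)|) ^ (τ - s) :=
    tsum_nonneg fun k => Real.rpow_nonneg (l1_nonneg k) _
  -- The summand `1` only serves to make the constant positive.
  refine ⟨(∑' k : Fin d → ℤ, (∑ i, |(k i : ℝ)|) ^ (τ - s)) + 1, by linarith, ?_⟩
  intro ν M n Ω₀ hν hM0 hsn _ hdio f hf hper _ hdecay hcoef Pcoef hΓ hnΓ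
  have hbound : ∀ k : Fin d → ℤ, (∑ i, |(k i : ℝ)|) ^ ((n : ℝ) - (s : ℝ)) * ‖hcoef k‖ ≤
      ν⁻¹ * M * (∑ i, |(k i : ℝ)|) ^ (τ - s) := by
    intro k
    by_cases hk : ∃ m : ℤ, (∑ i, (k i : ℝ) * Ω₀ i) = (m : ℝ)
    · rw [(hΓ k hk).1, norm_zero, mul_zero]
      have := Real.rpow_nonneg (l1_nonneg k) (τ - s)
      positivity
    · have hk0 : k ≠ 0 := by
        rintro rfl
        exact hk ⟨0, by simp⟩
      rw [(hnΓ k hk).1]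
      exact smallDivisor_bound (one_pos.trans_le (one_le_l1 hk0)) hν (hdecay k hk0) (hdio k hk)
  have hsum : Summable fun k : Fin d → ℤ =>
      (∑ i, |(k i : ℝ)|) ^ ((n : ℝ) - (s : ℝ)) * ‖hcoef k‖ :=
    (hS.mul_left (ν⁻¹ * M)).of_nonneg_of_le
      (fun k => mul_nonneg (Real.rpow_nonneg (l1_nonneg k) _) (norm_nonneg _)) hbound
  refine ⟨⟨hsum, ?_⟩, ?_⟩
  · calc _ ≤ ∑' k : Fin d → ℤ, ν⁻¹ * M * (∑ i, |(k i : ℝ)|) ^ (τ - s) :=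
          hsum.tsum_le_tsum hbound (hS.mul_left _)
      _ = (∑' k : Fin d → ℤ, (∑ i, |(k i : ℝ)|) ^ (τ - s)) * ν⁻¹ * M := by
          rw [tsum_mul_left]; ring
      _ ≤ _ := by gcongr; linarith
  have hsumh : Summable fun k : Fin d → ℤ => (∑ i, |(k i : ℝ)|) ^ (n - s) * ‖hcoef k‖ := by
    simpa only [← Nat.cast_sub hsn, Real.rpow_natCast] using hsum
  have hsumf := summable_weighted_fourierCoef (by linarith) hsn hdecay
  have hsumP : Summable fun k : Fin d → ℤ => (∑ i, |(k i : ℝ)|) ^ (n - s) * ‖Pcoef k‖ := by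
    refine hsumf.of_nonneg_of_le
      (fun k => mul_nonneg (pow_nonneg (l1_nonneg k) _) (norm_nonneg _)) fun k => ?_
    refine mul_le_mul_of_nonneg_left ?_ (pow_nonneg (l1_nonneg k) _)
    by_cases hk : ∃ m : ℤ, (∑ i, (k i : ℝ) * Ω₀ i) = (m : ℝ)
    · rw [(hΓ k hk).2]
    · rw [(hnΓ k hk).2, norm_zero]
      exact norm_nonneg _
  have hnegΓ : ∀ k : Fin d → ℤ, (∃ m : ℤ, (∑ i, ((-k) i : ℝ) * Ω₀ i) = (m : ℝ)) ↔
      ∃ m : ℤ, (∑ i, (k i : ℝ) * Ω₀ i) = (m : ℝ) := by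
    intro k
    have : ∑ i, (((-k) i : ℤ) : ℝ) * Ω₀ i = -∑ i, (k i : ℝ) * Ω₀ i := by simp
    rw [this]
    constructor
    · rintro ⟨m, hm⟩
      exact ⟨-m, by push_cast; linarith⟩
    · rintro ⟨m, hm⟩
      exact ⟨-m, by push_cast; linarith⟩
  have hconj : ∀ k, hcoef (-k) = starRingEnd ℂ (hcoef k) ∧
      Pcoef (-k) = starRingEnd ℂ (Pcoef k) := by
    intro k
    by_cases hk : ∃ m : ℤ, (∑ i, (k i : ℝ) * Ω₀ i) = (m : ℝ)
    · have hk' := (hnegΓ k).mpr hk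
      rw [(hΓ k hk).1, (hΓ k hk).2, (hΓ _ hk').1, (hΓ _ hk').2, fourierCoef_neg]
      simp
    · have hk' := fun h => hk ((hnegΓ k).mp h)
      rw [(hnΓ k hk).1, (hnΓ k hk).2, (hnΓ _ hk').1, (hnΓ _ hk').2, fourierCoef_neg]
      simp [← Complex.exp_conj, Complex.conj_ofNat]
  have hh := ofReal_re_series (c := hcoef) fun k => (hconj k).1
  have hP := ofReal_re_series (c := Pcoef) fun k => (hconj k).2
  refine ⟨fun θ => (∑' k, hcoef k * torusChar k θ).re, fun θ => (∑' k, Pcoef k * torusChar k θ).re,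
    Complex.reCLM.contDiff.comp (contDiff_series hsumh),
    Complex.reCLM.contDiff.comp (contDiff_series hsumP),
    fun θ k => by simp only [series_periodic], fun θ k => by simp only [series_periodic],
    hh, hP, fun θ => ?_⟩
  have hsh := summable_series (summable_norm_of_weighted hsumh)
  have hsP := summable_series (summable_norm_of_weighted hsumP)
  have hF := (hasSum_fourierCoef hf hper (summable_norm_of_weighted hsumf) θ).tsum_eq
  rw [← Complex.ofReal_inj, Complex.ofReal_sub, Complex.ofReal_sub, hh, hh, hP, ← hF,
    ← (hsh _).tsum_sub (hsh _),
    ← (summable_series (summable_norm_of_weighted hsumf) θ).tsum_sub (hsP _)]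
  refine tsum_congr fun k => ?_
  have hchar : torusChar k Ω₀ =
      Complex.exp (2 * (Real.pi : ℂ) * Complex.I * (∑ i, (k i : ℝ) * Ω₀ i : ℝ)) := by
    simp [torusChar]
  rw [torusChar_add]
  by_cases hk : ∃ m : ℤ, (∑ i, (k i : ℝ) * Ω₀ i) = (m : ℝ)
  · rw [(hΓ k hk).1, (hΓ k hk).2]
    ring
  · rw [(hnΓ k hk).1, (hnΓ k hk).2, ← hchar]
    -- Off the resonance module the divisor is nonzero, as `e^{2πix} = 1` forces `x ∈ ℤ`.
    have hne : torusChar k Ω₀ - 1 ≠ 0 := by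
      rw [sub_ne_zero, hchar, Ne, Complex.exp_eq_one_iff]
      rintro ⟨m, hm⟩
      refine hk ⟨m, ?_⟩
      have h2 := Complex.two_pi_I_ne_zero
      rw [mul_comm (m : ℂ)] at hm
      exact_mod_cast mul_left_cancel₀ h2 hm
    field_simp
    ring
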